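/- Let X and A be finite sets, D a probability distribution on X, φ: X×A → ℝ^d a feature map with ‖φ(x,a)‖₂ ≤ 1 for all (x,a), and π₀ a base policy with full support. For any θ, θ' ∈ ℝ^d, the linear softmax policies satisfy KL(π_θ ‖ π_{θ'}) ≤ ln(1 + χ²(π_θ, π_{θ'})) ≤ ‖θ − θ'‖₂², where KL(π ‖ π') = E_{x∼D}[Σ_a π(a|x)·ln(π(a|x)/π'(a|x))] and χ²(π_θ, π_{θ'}) = E_{x∼D}[Σ_a π_{θ'}(a|x)·(π_θ(a|x)/π_{θ'}(a|x))²] − 1. -/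

import Mathlib

/-!
The first inequality is Jensen's inequality for the concave function `log`, applied to the
likelihood ratio `π_θ / π_θ'` under the joint law of `(x, a)` with `x ∼ D`, `a ∼ π_θ(·|x)`: the mean
of the ratio under this law is exactly `1 + χ²`.

The second inequality holds for each prompt separately, as a case of Kantorovich's inequality.
With `u a = ⟨θ - θ', φ(x, a)⟩` and `r = ‖θ - θ'‖`, Cauchy-Schwarz gives `|u a| ≤ r`, and the
likelihood ratio is `R a = T * exp (u a)` with `T` the quotient of the normalizing constants. Since
`exp (u a)` lies in `[exp (-r), exp r]`, one has `R² ≤ 2 T cosh(r) R - T²`; averaging over `π_θ'`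
(under which `R` has mean one) gives `E R² ≤ 2 T cosh(r) - T² ≤ cosh(r)² ≤ exp(r²)`.
-/

open Finset

/-- Linear softmax policy: π_θ(a|x) ∝ π₀(a|x)·exp(θᵀφ(x,a)). -/
noncomputable def pol {X A : Type*} [Fintype A] {d : ℕ}
    (π₀ : X → A → ℝ) (φ : X → A → Fin d → ℝ) (θ : Fin d → ℝ) (x : X) (a : A) : ℝ :=
  π₀ x a * Real.exp (∑ i, θ i * φ x a i) /
    ∑ b, π₀ x b * Real.exp (∑ i, θ i * φ x b i)

/-- KL divergence between policies, averaged over x ∼ D. -/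
noncomputable def klPol {X A : Type*} [Fintype X] [Fintype A]
    (D : X → ℝ) (π π' : X → A → ℝ) : ℝ :=
  ∑ x, D x * ∑ a, π x a * Real.log (π x a / π' x a)

/-- χ² divergence between policies, averaged over x ∼ D. -/
noncomputable def chiSqPol {X A : Type*} [Fintype X] [Fintype A]
    (D : X → ℝ) (π π' : X → A → ℝ) : ℝ :=
  (∑ x, D x * ∑ a, π' x a * (π x a / π' x a)^2) - 1

theorem pol_partition_pos {X A : Type*} [Fintype A] [Nonempty A] {d : ℕ}
    (φ : X → A → Fin d → ℝ) (π₀ : X → A → ℝ) (hπ₀ : ∀ x a, 0 < π₀ x a)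
    (θ : Fin d → ℝ) (x : X) : 0 < ∑ b, π₀ x b * Real.exp (∑ i, θ i * φ x b i) :=
  Finset.sum_pos (fun b _ => mul_pos (hπ₀ x b) (Real.exp_pos _)) Finset.univ_nonempty

theorem pol_pos {X A : Type*} [Fintype A] [Nonempty A] {d : ℕ}
    (φ : X → A → Fin d → ℝ) (π₀ : X → A → ℝ) (hπ₀ : ∀ x a, 0 < π₀ x a)
    (θ : Fin d → ℝ) (x : X) (a : A) : 0 < pol π₀ φ θ x a :=
  div_pos (mul_pos (hπ₀ x a) (Real.exp_pos _)) (pol_partition_pos φ π₀ hπ₀ θ x)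

theorem pol_sum {X A : Type*} [Fintype A] [Nonempty A] {d : ℕ}
    (φ : X → A → Fin d → ℝ) (π₀ : X → A → ℝ) (hπ₀ : ∀ x a, 0 < π₀ x a)
    (θ : Fin d → ℝ) (x : X) : ∑ a, pol π₀ φ θ x a = 1 := by
  unfold pol
  rw [← Finset.sum_div]
  exact div_self (pol_partition_pos φ π₀ hπ₀ θ x).ne'

/-- The likelihood ratio of two softmax policies is an exponential tilt, up to the quotient of the
normalizing constants. -/
theorem pol_div_pol {X A : Type*} [Fintype A] [Nonempty A] {d : ℕ}
    (φ : X → A → Fin d → ℝ) (π₀ : X → A → ℝ) (hπ₀ : ∀ x a, 0 < π₀ x a)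
    (θ θ' : Fin d → ℝ) (x : X) (a : A) :
    pol π₀ φ θ x a / pol π₀ φ θ' x a =
      (∑ b, π₀ x b * Real.exp (∑ i, θ' i * φ x b i)) /
        (∑ b, π₀ x b * Real.exp (∑ i, θ i * φ x b i)) *
        Real.exp (∑ i, (θ i - θ' i) * φ x a i) := by
  have h1 := (pol_partition_pos φ π₀ hπ₀ θ x).ne'
  have h2 := (pol_partition_pos φ π₀ hπ₀ θ' x).ne'
  have h3 := (hπ₀ x a).ne'
  have h4 : Real.exp (∑ i, (θ i - θ' i) * φ x a i) =
      Real.exp (∑ i, θ i * φ x a i) / Real.exp (∑ i, θ' i * φ x a i) := by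
    rw [← Real.exp_sub, ← Finset.sum_sub_distrib]
    simp only [sub_mul]
  have h5 := (Real.exp_pos (∑ i, θ' i * φ x a i)).ne'
  rw [h4]
  unfold pol
  field_simp

/-- The chord bound `(t - exp (-r)) * (exp r - t) ≥ 0` at `t = exp u`, expanded. -/
theorem exp_sq_le_of_abs_le {u r : ℝ} (h : |u| ≤ |r|) :
    Real.exp u ^ 2 ≤ 2 * Real.cosh r * Real.exp u - 1 := by
  have h1 : Real.cosh u ≤ Real.cosh r := Real.cosh_le_cosh.2 h
  have h2 := Real.exp_pos u
  have h3 : Real.exp u * Real.exp (-u) = 1 := by rw [← Real.exp_add]; simp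
  rw [Real.cosh_eq u] at h1
  nlinarith [mul_le_mul_of_nonneg_left h1 h2.le]

/-- The second moment of the likelihood ratio at a single prompt. -/
theorem pol_ratio_sq_le {X A : Type*} [Fintype A] [Nonempty A] {d : ℕ}
    (φ : X → A → Fin d → ℝ) (hφ : ∀ x a, ∑ i, (φ x a i) ^ 2 ≤ 1)
    (π₀ : X → A → ℝ) (hπ₀ : ∀ x a, 0 < π₀ x a) (θ θ' : Fin d → ℝ) (x : X) :
    ∑ a, pol π₀ φ θ' x a * (pol π₀ φ θ x a / pol π₀ φ θ' x a) ^ 2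
      ≤ Real.exp (∑ i, (θ i - θ' i) ^ 2) := by
  set N := ∑ i, (θ i - θ' i) ^ 2 with hN
  have hN0 : 0 ≤ N := Finset.sum_nonneg fun i _ => sq_nonneg _
  set c := Real.cosh (√N) with hc
  set T := (∑ b, π₀ x b * Real.exp (∑ i, θ' i * φ x b i)) /
    (∑ b, π₀ x b * Real.exp (∑ i, θ i * φ x b i)) with hT
  have key : ∀ a, pol π₀ φ θ' x a * (pol π₀ φ θ x a / pol π₀ φ θ' x a) ^ 2 ≤
      2 * c * T * pol π₀ φ θ x a - T ^ 2 * pol π₀ φ θ' x a := by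
    intro a
    have hq := pol_pos φ π₀ hπ₀ θ' x a
    have hu : |∑ i, (θ i - θ' i) * φ x a i| ≤ |√N| := by
      rw [← sq_le_sq, Real.sq_sqrt hN0]
      calc (∑ i, (θ i - θ' i) * φ x a i) ^ 2
          ≤ N * ∑ i, (φ x a i) ^ 2 := Finset.sum_mul_sq_le_sq_mul_sq _ _ _
        _ ≤ N := mul_le_of_le_one_right hN0 (hφ x a)
    have hE := exp_sq_le_of_abs_le hu
    have hR := pol_div_pol φ π₀ hπ₀ θ θ' x a
    rw [← hT] at hR
    have hp : pol π₀ φ θ x a =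
        T * Real.exp (∑ i, (θ i - θ' i) * φ x a i) * pol π₀ φ θ' x a := by
      rw [← hR, div_mul_cancel₀ _ hq.ne']
    rw [hR, hp]
    have := mul_le_mul_of_nonneg_left hE (mul_nonneg hq.le (sq_nonneg T))
    linarith
  have hcexp : c ^ 2 ≤ Real.exp N := by
    have h1 : c ≤ Real.exp (N / 2) := by
      have := Real.cosh_le_exp_half_sq (√N)
      rwa [Real.sq_sqrt hN0] at this
    calc c ^ 2 ≤ Real.exp (N / 2) ^ 2 := pow_le_pow_left₀ (Real.cosh_pos _).le h1 2
      _ = Real.exp N := by rw [← Real.exp_nat_mul]; congr 1; push_cast; ring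
  calc _ ≤ ∑ a, (2 * c * T * pol π₀ φ θ x a - T ^ 2 * pol π₀ φ θ' x a) :=
        Finset.sum_le_sum fun a _ => key a
    _ = 2 * c * T - T ^ 2 := by
        rw [Finset.sum_sub_distrib, ← Finset.mul_sum, ← Finset.mul_sum,
          pol_sum φ π₀ hπ₀, pol_sum φ π₀ hπ₀, mul_one, mul_one]
    _ ≤ c ^ 2 := by nlinarith [sq_nonneg (c - T)]
    _ ≤ _ := hcexp

/-- KL(π_θ ‖ π_{θ'}) ≤ ln(1 + χ²(π_θ, π_{θ'})) ≤ ‖θ − θ'‖₂² for linear softmax policies. -/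
theorem kl_le_log_one_add_chiSq_le_sq_dist {X A : Type*} [Fintype X] [Fintype A]
    [Nonempty X] [Nonempty A] (d : ℕ)
    (D : X → ℝ) (hD : ∀ x, 0 ≤ D x) (hD1 : ∑ x, D x = 1)
    (φ : X → A → Fin d → ℝ) (hφ : ∀ x a, ∑ i, (φ x a i)^2 ≤ 1)
    (π₀ : X → A → ℝ) (hπ₀ : ∀ x a, 0 < π₀ x a) (hπ₀1 : ∀ x, ∑ a, π₀ x a = 1)
    (θ θ' : Fin d → ℝ) :
    klPol D (pol π₀ φ θ) (pol π₀ φ θ')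
        ≤ Real.log (1 + chiSqPol D (pol π₀ φ θ) (pol π₀ φ θ')) ∧
    Real.log (1 + chiSqPol D (pol π₀ φ θ) (pol π₀ φ θ'))
        ≤ ∑ i, (θ i - θ' i)^2 := by
  set p := pol π₀ φ θ with hp
  set q := pol π₀ φ θ' with hq
  have hp0 : ∀ x a, 0 < p x a := pol_pos φ π₀ hπ₀ θ
  have hq0 : ∀ x a, 0 < q x a := pol_pos φ π₀ hπ₀ θ'
  have hp1 : ∀ x, ∑ a, p x a = 1 := pol_sum φ π₀ hπ₀ θ
  set S := ∑ x, D x * ∑ a, q x a * (p x a / q x a) ^ 2 with hS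
  have hS1 : 1 + chiSqPol D p q = S := by unfold chiSqPol; ring
  have hs0 : ∀ x, 0 < ∑ a, q x a * (p x a / q x a) ^ 2 := fun x =>
    Finset.sum_pos (fun a _ => mul_pos (hq0 x a) (pow_pos (div_pos (hp0 x a) (hq0 x a)) 2))
      Finset.univ_nonempty
  have hS0 : 0 < S := by
    obtain ⟨x, -, hx⟩ : ∃ x ∈ Finset.univ, D x ≠ 0 :=
      Finset.exists_ne_zero_of_sum_ne_zero (by rw [hD1]; exact one_ne_zero)
    exact Finset.sum_pos' (fun y _ => mul_nonneg (hD y) (hs0 y).le)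
      ⟨x, Finset.mem_univ x, mul_pos (lt_of_le_of_ne (hD x) hx.symm) (hs0 x)⟩
  rw [hS1]
  constructor
  · -- Jensen's inequality, via the tangent line to `log` at the mean `S` of the ratio.
    have key : ∀ x, ∑ a, p x a * Real.log (p x a / q x a) ≤
        (∑ a, q x a * (p x a / q x a) ^ 2) / S - 1 + Real.log S := by
      intro x
      calc ∑ a, p x a * Real.log (p x a / q x a)
          ≤ ∑ a, (q x a * (p x a / q x a) ^ 2 / S + p x a * (Real.log S - 1)) := by
            refine Finset.sum_le_sum fun a _ => ?_
            have hR := div_pos (hp0 x a) (hq0 x a)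
            have h1 := Real.log_le_sub_one_of_pos (div_pos hR hS0)
            rw [Real.log_div hR.ne' hS0.ne'] at h1
            have h2 := mul_le_mul_of_nonneg_left h1 (hp0 x a).le
            have h3 : q x a * (p x a / q x a) ^ 2 / S = p x a * (p x a / q x a / S) := by
              have := (hq0 x a).ne'
              field_simp
            rw [h3]
            linarith
        _ = _ := by
            rw [Finset.sum_add_distrib, ← Finset.sum_div, ← Finset.sum_mul, hp1]
            ring
    calc klPol D p q
        ≤ ∑ x, (D x * (∑ a, q x a * (p x a / q x a) ^ 2) / S + D x * (Real.log S - 1)) := by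
          refine Finset.sum_le_sum fun x _ => ?_
          have := mul_le_mul_of_nonneg_left (key x) (hD x)
          rw [mul_div_assoc]
          linarith
      _ = Real.log S := by
          rw [Finset.sum_add_distrib, ← Finset.sum_div, ← Finset.sum_mul, hD1, ← hS,
            div_self hS0.ne']
          ring
  · rw [Real.log_le_iff_le_exp hS0]
    calc S ≤ ∑ x, D x * Real.exp (∑ i, (θ i - θ' i) ^ 2) :=
          Finset.sum_le_sum fun x _ =>
            mul_le_mul_of_nonneg_left (pol_ratio_sq_le φ hφ π₀ hπ₀ θ θ' x) (hD x)
      _ = _ := by rw [← Finset.sum_mul, hD1, one_mul]
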